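/- Let n ≥ 1 and fix constants 0 < m ≤ M, C₁ ≥ 0, C ≥ 0, R₀ > 0. Let g assign to each x ∈ ℝⁿ a positive definite quadratic form g_x on ℝⁿ, continuously in x, such that m·|v|² ≤ g_x(v,v) ≤ M·|v|² for all x ∈ ℝⁿ and v ∈ ℝⁿ, and such that for |x| ≥ R₀ and all v ∈ ℝⁿ: (e^{−C₁} − C/|x|)·|v| ≤ √(g_x(v,v)) ≤ (e^{C₁} + C/|x|)·|v|. Define the length metric d_g(p,q) = inf{ ∫ √(g_{γ(t)}(γ′(t), γ′(t))) dt : γ a piecewise continuously differentiable curve from p to q in ℝⁿ }. Then there exist constants R₁ > 0 and C₂ > 0, depending only on n, m, M, C₁, C, R₀, such that for every x ∈ ℝⁿ with |x| ≥ R₁: e^{−C₂}·|x| − C₂ ≤ d_g(0, x) ≤ e^{C₂}·|x| + C₂. -/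

import Mathlib

/-- The set of lengths of piecewise continuously differentiable curves joining `p` to `q`,
measured in the (quadratic-form valued) Riemannian metric `Q`.  A curve is recorded together
with its derivative function `γ'`, which is allowed to be undefined (as a derivative) on a
finite exceptional set `T`. -/
noncomputable def lengthsSet (n : ℕ)
    (Q : EuclideanSpace ℝ (Fin n) → QuadraticForm ℝ (EuclideanSpace ℝ (Fin n)))
    (p q : EuclideanSpace ℝ (Fin n)) : Set ℝ :=
  {L | ∃ (a b : ℝ) (γ γ' : ℝ → EuclideanSpace ℝ (Fin n)) (T : Finset ℝ),
    a ≤ b ∧ ContinuousOn γ (Set.Icc a b) ∧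
    (∀ t ∈ Set.Icc a b \ (T : Set ℝ), HasDerivAt γ (γ' t) t) ∧
    ContinuousOn γ' (Set.Icc a b \ (T : Set ℝ)) ∧
    (∃ K : ℝ, ∀ t ∈ Set.Icc a b \ (T : Set ℝ), ‖γ' t‖ ≤ K) ∧
    γ a = p ∧ γ b = q ∧
    L = ∫ t in a..b, Real.sqrt (Q (γ t) (γ' t))}

open MeasureTheory in
theorem intervalIntegrable_aux {E : Type*} [NormedAddCommGroup E] [SecondCountableTopology E]
    (a b : ℝ) (hab : a ≤ b) (f : ℝ → E) (T : Finset ℝ)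
    (hf : ContinuousOn f (Set.Icc a b \ (T : Set ℝ))) (K : ℝ)
    (hK : ∀ t ∈ Set.Icc a b \ (T : Set ℝ), ‖f t‖ ≤ K) :
    IntervalIntegrable f volume a b := by
  rw [intervalIntegrable_iff_integrableOn_Icc_of_le hab]
  have hT : MeasurableSet (T : Set ℝ) := T.measurableSet
  have hms : MeasurableSet (Set.Icc a b \ (T : Set ℝ)) := measurableSet_Icc.diff hT
  have h1 : IntegrableOn f (Set.Icc a b \ (T : Set ℝ)) volume := by
    refine IntegrableOn.of_bound ?_ (hf.aestronglyMeasurable hms) K ?_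
    · exact ((measure_mono Set.sdiff_subset).trans_lt measure_Icc_lt_top)
    · exact (ae_restrict_iff' hms).2 (Filter.Eventually.of_forall hK)
  refine h1.congr_set_ae ?_
  exact (sdiff_null_ae_eq_self (T.finite_toSet.measure_zero _)).symm

open MeasureTheory in
theorem length_lower (n : ℕ) (m M : ℝ) (hm : 0 < m)
    (Q : EuclideanSpace ℝ (Fin n) → QuadraticForm ℝ (EuclideanSpace ℝ (Fin n)))
    (hQ : Continuous (fun pr : EuclideanSpace ℝ (Fin n) × EuclideanSpace ℝ (Fin n) =>
          Q pr.1 pr.2))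
    (hb : ∀ (x v : EuclideanSpace ℝ (Fin n)), m * ‖v‖^2 ≤ Q x v ∧ Q x v ≤ M * ‖v‖^2)
    (x : EuclideanSpace ℝ (Fin n)) (L : ℝ) (hL : L ∈ lengthsSet n Q 0 x) :
    Real.sqrt m * ‖x‖ ≤ L := by
  obtain ⟨a, b, γ, γ', T, hab, hγ, hd, hγ', ⟨K, hK⟩, ha, hb', rfl⟩ := hL
  have hlow : ∀ y v, Real.sqrt m * ‖v‖ ≤ Real.sqrt (Q y v) := by
    intro y v
    apply Real.le_sqrt_of_sq_le
    rw [mul_pow, Real.sq_sqrt hm.le]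
    exact (hb y v).1
  have hup : ∀ y v, Real.sqrt (Q y v) ≤ Real.sqrt |M| * ‖v‖ := by
    intro y v
    apply Real.sqrt_le_iff.2 ⟨by positivity, ?_⟩
    rw [mul_pow, Real.sq_sqrt (abs_nonneg M)]
    exact (hb y v).2.trans (by gcongr; exact le_abs_self M)
  have hi : IntervalIntegrable γ' volume a b := intervalIntegrable_aux a b hab γ' T hγ' K hK
  have hc : ContinuousOn (fun t => Real.sqrt (Q (γ t) (γ' t))) (Set.Icc a b \ (T : Set ℝ)) :=
    Real.continuous_sqrt.comp_continuousOn
      (hQ.comp_continuousOn ((hγ.mono Set.sdiff_subset).prodMk hγ'))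
  have hi2 : IntervalIntegrable (fun t => Real.sqrt (Q (γ t) (γ' t))) volume a b := by
    refine intervalIntegrable_aux a b hab _ T hc (Real.sqrt |M| * K) ?_
    intro t ht
    rw [Real.norm_of_nonneg (Real.sqrt_nonneg _)]
    exact (hup _ _).trans (by gcongr; exact hK t ht)
  have hF : ∫ t in a..b, γ' t = γ b - γ a := by
    refine integral_eq_of_hasDerivAt_off_countable γ γ' T.countable_toSet ?_ ?_ hi
    · rwa [Set.uIcc_of_le hab]
    · intro t ht
      rw [min_eq_left hab, max_eq_right hab] at ht
      exact hd t ⟨Set.Ioo_subset_Icc_self ht.1, ht.2⟩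
  rw [ha, hb', sub_zero] at hF
  calc Real.sqrt m * ‖x‖ ≤ Real.sqrt m * ∫ t in a..b, ‖γ' t‖ := by
        gcongr
        rw [← hF]
        exact intervalIntegral.norm_integral_le_integral_norm hab
    _ = ∫ t in a..b, Real.sqrt m * ‖γ' t‖ := by
        rw [intervalIntegral.integral_const_mul]
    _ ≤ _ := intervalIntegral.integral_mono_on hab (hi.norm.const_mul _) hi2
        (fun t _ => hlow _ _)

theorem length_upper (n : ℕ) (M : ℝ) (hM : 0 < M)
    (Q : EuclideanSpace ℝ (Fin n) → QuadraticForm ℝ (EuclideanSpace ℝ (Fin n)))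
    (hQ : Continuous (fun pr : EuclideanSpace ℝ (Fin n) × EuclideanSpace ℝ (Fin n) =>
          Q pr.1 pr.2))
    (hb : ∀ (x v : EuclideanSpace ℝ (Fin n)), Q x v ≤ M * ‖v‖^2)
    (x : EuclideanSpace ℝ (Fin n)) :
    ∃ L ∈ lengthsSet n Q 0 x, L ≤ Real.sqrt M * ‖x‖ := by
  refine ⟨_, ⟨0, 1, fun t => t • x, fun _ => x, ∅, zero_le_one, by fun_prop, ?_,
    by fun_prop, ⟨‖x‖, fun _ _ => le_rfl⟩, by simp, by simp, rfl⟩, ?_⟩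
  · intro t _
    simpa using (hasDerivAt_id t).smul_const x
  · have hup : ∀ y v, Real.sqrt (Q y v) ≤ Real.sqrt M * ‖v‖ := by
      intro y v
      apply Real.sqrt_le_iff.2 ⟨by positivity, ?_⟩
      rw [mul_pow, Real.sq_sqrt hM.le]
      exact hb y v
    have hc : Continuous (fun t : ℝ => Real.sqrt (Q (t • x) x)) :=
      Real.continuous_sqrt.comp (hQ.comp (f := fun t : ℝ => (t • x, x)) (by fun_prop))
    calc _ ≤ ∫ t in (0:ℝ)..1, Real.sqrt M * ‖x‖ :=
          intervalIntegral.integral_mono_on zero_le_one (hc.intervalIntegrable _ _)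
            (by simp) (fun t _ => hup _ _)
      _ = _ := by simp

theorem stmt_9 (n : ℕ) (hn : 1 ≤ n) (m M C₁ C R₀ : ℝ)
    (hm : 0 < m) (hmM : m ≤ M) (hC₁ : 0 ≤ C₁) (hC : 0 ≤ C) (hR₀ : 0 < R₀) :
    ∃ R₁ : ℝ, 0 < R₁ ∧ ∃ C₂ : ℝ, 0 < C₂ ∧
      ∀ Q : EuclideanSpace ℝ (Fin n) → QuadraticForm ℝ (EuclideanSpace ℝ (Fin n)),
        Continuous (fun pr : EuclideanSpace ℝ (Fin n) × EuclideanSpace ℝ (Fin n) =>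
          Q pr.1 pr.2) →
        (∀ (x v : EuclideanSpace ℝ (Fin n)),
          m * ‖v‖^2 ≤ Q x v ∧ Q x v ≤ M * ‖v‖^2) →
        (∀ x : EuclideanSpace ℝ (Fin n), R₀ ≤ ‖x‖ → ∀ v,
          (Real.exp (-C₁) - C/‖x‖) * ‖v‖ ≤ Real.sqrt (Q x v) ∧
          Real.sqrt (Q x v) ≤ (Real.exp C₁ + C/‖x‖) * ‖v‖) →
        ∀ x : EuclideanSpace ℝ (Fin n), R₁ ≤ ‖x‖ →
          Real.exp (-C₂) * ‖x‖ - C₂ ≤ sInf (lengthsSet n Q 0 x) ∧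
          sInf (lengthsSet n Q 0 x) ≤ Real.exp C₂ * ‖x‖ + C₂ := by
  have hM : 0 < M := hm.trans_le hmM
  have hsm : 0 < Real.sqrt m := Real.sqrt_pos.2 hm
  have hsM : 0 < Real.sqrt M := Real.sqrt_pos.2 hM
  refine ⟨1, one_pos, 1 + |Real.log (Real.sqrt m)| + |Real.log (Real.sqrt M)|, by positivity, ?_⟩
  intro Q hQ hb _ x _
  set C₂ := 1 + |Real.log (Real.sqrt m)| + |Real.log (Real.sqrt M)| with hC₂
  have hpos : 0 < C₂ := by positivity
  have h1 : Real.exp (-C₂) ≤ Real.sqrt m := by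
    rw [← Real.le_log_iff_exp_le hsm]
    have := neg_abs_le (Real.log (Real.sqrt m))
    have := abs_nonneg (Real.log (Real.sqrt M))
    linarith
  have h2 : Real.sqrt M ≤ Real.exp C₂ := by
    rw [← Real.log_le_iff_le_exp hsM]
    have := le_abs_self (Real.log (Real.sqrt M))
    have := abs_nonneg (Real.log (Real.sqrt m))
    linarith
  have hlow := length_lower n m M hm Q hQ hb x
  obtain ⟨L, hL, hLle⟩ := length_upper n M hM Q hQ (fun y v => (hb y v).2) x
  have h3 := mul_le_mul_of_nonneg_right h1 (norm_nonneg x)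
  have h4 := mul_le_mul_of_nonneg_right h2 (norm_nonneg x)
  constructor
  · have := le_csInf ⟨L, hL⟩ hlow
    linarith
  · have := csInf_le ⟨_, hlow⟩ hL
    linarith
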